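/- arXiv:2306.16861 — 2 statements merged into one kernel-verified Lean document; each statement's English description precedes it below -/
import Mathlib

section
/- Let $N, K$ be positive integers, $P_t > 0$, and for each $k = 1,\dots,K$ let $h_k \in \mathbb{C}^N$ and $\sigma_k > 0$. For $W \in \mathbb{C}^{N \times K}$ with columns $w_1,\dots,w_K$, define the modified SINR $\hat\gamma_k(W) = |h_k^H w_k|^2 / \big(\sum_{i \neq k} |h_k^H w_i|^2 + (\sigma_k^2/P_t)\|W\|_F^2\big)$ and the true SINR $\gamma_k(W) = |h_k^H w_k|^2 / \big(\sum_{i \neq k} |h_k^H w_i|^2 + \sigma_k^2\big)$, and set $\tilde R(W) = \sum_{k=1}^K \log_2(1 + \hat\gamma_k(W))$ and $R(W) = \sum_{k=1}^K \log_2(1 + \gamma_k(W))$. Let $\mathcal{W} \subseteq \mathbb{C}^{N \times K}$ be a set closed under multiplication by positive real scalars. Suppose $\tilde W \in \mathcal{W}$ with $\tilde W \neq 0$ satisfies $\tilde R(W) \le \tilde R(\tilde W)$ for all $W \in \mathcal{W}$. Then $W^* := (\sqrt{P_t}/\|\tilde W\|_F)\,\tilde W$ belongs to $\mathcal{W}$,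 satisfies $\|W^*\|_F^2 = P_t$, and satisfies $R(W) \le R(W^*)$ for every $W \in \mathcal{W}$ with $\|W\|_F^2 \le P_t$. -/
/-!
The modified SINR `γ̂_k` is invariant under scaling by a positive real (`gammaHat_smul`), since its
numerator and denominator are both homogeneous of degree two. It equals the true SINR at full power
`‖W‖_F² = P_t` (`gammaHat_eq_gammaTrue`) and dominates it when `‖W‖_F² ≤ P_t`
(`gammaTrue_le_gammaHat`), because its noise term is then the smaller one. Hence, for feasible `W`,
`R(W) ≤ R̃(W) ≤ R̃(W̃) = R̃(W*) = R(W*)`.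
-/

open Finset

/-- Squared Frobenius norm of a complex matrix. -/
noncomputable def frobSq {N K : ℕ} (W : Matrix (Fin N) (Fin K) ℂ) : ℝ :=
  ∑ n, ∑ k, ‖W n k‖ ^ 2

/-- Inner product `h^H w`. -/
noncomputable def ip {N : ℕ} (h w : Fin N → ℂ) : ℂ :=
  ∑ n, (starRingEnd ℂ) (h n) * w n

/-- Modified SINR `γ̂_k(W)`. -/
noncomputable def gammaHat {N K : ℕ} (h : Fin K → Fin N → ℂ) (σ : Fin K → ℝ) (Pt : ℝ)
    (k : Fin K) (W : Matrix (Fin N) (Fin K) ℂ) : ℝ :=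
  ‖ip (h k) (fun n => W n k)‖ ^ 2 /
    ((∑ i ∈ Finset.univ.erase k, ‖ip (h k) (fun n => W n i)‖ ^ 2) +
      σ k ^ 2 / Pt * frobSq W)

/-- True SINR `γ_k(W)`. -/
noncomputable def gammaTrue {N K : ℕ} (h : Fin K → Fin N → ℂ) (σ : Fin K → ℝ)
    (k : Fin K) (W : Matrix (Fin N) (Fin K) ℂ) : ℝ :=
  ‖ip (h k) (fun n => W n k)‖ ^ 2 /
    ((∑ i ∈ Finset.univ.erase k, ‖ip (h k) (fun n => W n i)‖ ^ 2) + σ k ^ 2)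

/-- Modified sum rate `R̃(W)`. -/
noncomputable def Rtilde {N K : ℕ} (h : Fin K → Fin N → ℂ) (σ : Fin K → ℝ) (Pt : ℝ)
    (W : Matrix (Fin N) (Fin K) ℂ) : ℝ :=
  ∑ k, Real.logb 2 (1 + gammaHat h σ Pt k W)

/-- True sum rate `R(W)`. -/
noncomputable def Rtrue {N K : ℕ} (h : Fin K → Fin N → ℂ) (σ : Fin K → ℝ)
    (W : Matrix (Fin N) (Fin K) ℂ) : ℝ :=
  ∑ k, Real.logb 2 (1 + gammaTrue h σ k W)

theorem ip_smul {N : ℕ} (h w : Fin N → ℂ) (c : ℂ) :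
    ip h (fun n => c * w n) = c * ip h w := by
  unfold ip
  rw [Finset.mul_sum]
  exact Finset.sum_congr rfl fun n _ => by ring

theorem frobSq_nonneg {N K : ℕ} (W : Matrix (Fin N) (Fin K) ℂ) : 0 ≤ frobSq W := by
  unfold frobSq
  positivity

theorem eq_zero_of_frobSq_eq_zero {N K : ℕ} {W : Matrix (Fin N) (Fin K) ℂ}
    (hW : frobSq W = 0) : W = 0 := by
  ext n k
  unfold frobSq at hW
  rw [Finset.sum_eq_zero_iff_of_nonneg (fun _ _ => by positivity)] at hW
  have h1 := hW n (Finset.mem_univ n)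
  rw [Finset.sum_eq_zero_iff_of_nonneg (fun _ _ => by positivity)] at h1
  simpa using h1 k (Finset.mem_univ k)

theorem frobSq_smul {N K : ℕ} (c : ℝ) (W : Matrix (Fin N) (Fin K) ℂ) :
    frobSq ((c : ℂ) • W) = c ^ 2 * frobSq W := by
  simp [frobSq, Finset.mul_sum, mul_pow]

theorem gammaHat_smul {N K : ℕ} (h : Fin K → Fin N → ℂ) (σ : Fin K → ℝ) (Pt : ℝ)
    (k : Fin K) (W : Matrix (Fin N) (Fin K) ℂ) {c : ℝ} (hc : 0 < c) :
    gammaHat h σ Pt k ((c : ℂ) • W) = gammaHat h σ Pt k W := by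
  unfold gammaHat
  simp only [Matrix.smul_apply, smul_eq_mul, ip_smul, frobSq_smul, norm_mul, mul_pow,
    Complex.norm_real, Real.norm_eq_abs, sq_abs]
  rw [← Finset.mul_sum, mul_left_comm, ← mul_add]
  exact mul_div_mul_left _ _ (by positivity)

theorem gammaHat_eq_gammaTrue {N K : ℕ} (h : Fin K → Fin N → ℂ) (σ : Fin K → ℝ) {Pt : ℝ}
    (hPt : 0 < Pt) (k : Fin K) {W : Matrix (Fin N) (Fin K) ℂ} (hW : frobSq W = Pt) :
    gammaHat h σ Pt k W = gammaTrue h σ k W := by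
  unfold gammaHat gammaTrue
  rw [hW, div_mul_cancel₀ _ hPt.ne']

theorem gammaTrue_nonneg {N K : ℕ} (h : Fin K → Fin N → ℂ) (σ : Fin K → ℝ)
    (k : Fin K) (W : Matrix (Fin N) (Fin K) ℂ) : 0 ≤ gammaTrue h σ k W := by
  unfold gammaTrue
  positivity

theorem gammaTrue_le_gammaHat {N K : ℕ} (h : Fin K → Fin N → ℂ) {σ : Fin K → ℝ} {Pt : ℝ}
    (hPt : 0 < Pt) (k : Fin K) (hσ : 0 < σ k) {W : Matrix (Fin N) (Fin K) ℂ}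
    (hW : frobSq W ≤ Pt) : gammaTrue h σ k W ≤ gammaHat h σ Pt k W := by
  rcases (frobSq_nonneg W).eq_or_lt with h0 | hpos
  · -- At `W = 0` the denominator of `γ̂_k` vanishes, but both numerators are zero.
    have hW0 := eq_zero_of_frobSq_eq_zero h0.symm
    simp [hW0, gammaTrue, gammaHat, ip]
  · have hnoise : σ k ^ 2 / Pt * frobSq W ≤ σ k ^ 2 := by
      rw [div_mul_eq_mul_div, div_le_iff₀ hPt]
      gcongr
    unfold gammaTrue gammaHat
    gcongr

/-- Lemma 1: a maximizer of the modified sum rate over a positively-scaling-closed set,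
rescaled to full power, maximizes the true sum rate over the power-constrained set. -/
theorem power_rescaled_maximizer {N K : ℕ} (hN : 0 < N) (hK : 0 < K)
    (Pt : ℝ) (hPt : 0 < Pt)
    (h : Fin K → Fin N → ℂ) (σ : Fin K → ℝ) (hσ : ∀ k, 0 < σ k)
    (𝒲 : Set (Matrix (Fin N) (Fin K) ℂ))
    (hclosed : ∀ c : ℝ, 0 < c → ∀ W ∈ 𝒲, (c : ℂ) • W ∈ 𝒲)
    (Wt : Matrix (Fin N) (Fin K) ℂ) (hWt : Wt ∈ 𝒲) (hWt0 : Wt ≠ 0)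
    (hopt : ∀ W ∈ 𝒲, Rtilde h σ Pt W ≤ Rtilde h σ Pt Wt) :
    ((↑(Real.sqrt Pt / Real.sqrt (frobSq Wt)) : ℂ) • Wt ∈ 𝒲) ∧
    frobSq ((↑(Real.sqrt Pt / Real.sqrt (frobSq Wt)) : ℂ) • Wt) = Pt ∧
    ∀ W ∈ 𝒲, frobSq W ≤ Pt →
      Rtrue h σ W ≤ Rtrue h σ ((↑(Real.sqrt Pt / Real.sqrt (frobSq Wt)) : ℂ) • Wt) := by
  have hF : 0 < frobSq Wt :=
    (frobSq_nonneg Wt).lt_of_ne fun h0 => hWt0 (eq_zero_of_frobSq_eq_zero h0.symm)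
  have hc : 0 < Real.sqrt Pt / Real.sqrt (frobSq Wt) := by positivity
  have hfrob : frobSq ((↑(Real.sqrt Pt / Real.sqrt (frobSq Wt)) : ℂ) • Wt) = Pt := by
    rw [frobSq_smul, div_pow, Real.sq_sqrt hPt.le, Real.sq_sqrt hF.le, div_mul_cancel₀ _ hF.ne']
  refine ⟨hclosed _ hc Wt hWt, hfrob, fun W hW hWP => ?_⟩
  calc Rtrue h σ W ≤ Rtilde h σ Pt W := by
        refine Finset.sum_le_sum fun k _ => ?_
        have h1 := gammaTrue_nonneg h σ k W
        have h2 := gammaTrue_le_gammaHat h hPt k (hσ k) hWP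
        exact Real.logb_le_logb_of_le (by norm_num) (by linarith) (by linarith)
    _ ≤ Rtilde h σ Pt Wt := hopt W hW
    _ = Rtrue h σ ((↑(Real.sqrt Pt / Real.sqrt (frobSq Wt)) : ℂ) • Wt) := by
        refine Finset.sum_congr rfl fun k _ => ?_
        rw [← gammaHat_eq_gammaTrue h σ hPt k hfrob, gammaHat_smul h σ Pt k Wt hc]
end

section
/- Let $M, N, N_T$ be positive integers with $N_T$ dividing $N$, let $d > 0$, $c > 0$, $r \ge 0$, $\theta \in \mathbb{R}$, and $f_1, \dots, f_M \in \mathbb{R}$. For $l = 1, \dots, N_T$ set $\xi_l = \big(l - 1 - \tfrac{N_T-1}{2}\big)\tfrac{N}{N_T}$ and $\nu_l = \sqrt{ r^2 + \xi_l^2 d^2 - 2 r \xi_l d \cos\theta }$, and let $\nu_{\max} = \max_{1 \le l \le N_T} \nu_l$. Define, for $t = (t_1, \dots, t_{N_T}) \in \mathbb{R}^{N_T}$, the objective $F(t) = \sum_{m=1}^M \Big| \sum_{l=1}^{N_T} \exp\!\Big( -j 2\pi f_m \big( \tfrac{\nu_l - r}{c} + t_l \big) \Big) \Big|$. Suppose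 $t_{\max} \ge \frac{N (N_T - 1) d}{N_T c}$. Then the vector $t^*$ with entries $t^*_l = (\nu_{\max} - \nu_l)/c$ satisfies $t^*_l \in [0, t_{\max}]$ for every $l$, and $F(t) \le M N_T = F(t^*)$ for every $t \in \mathbb{R}^{N_T}$; in particular $t^*$ maximizes $F$ over $[0, t_{\max}]^{N_T}$. -/
open Finset Real

/-!
The distance `ν l` from the user to the `l`-th sub-array centre is, as a function of the
coordinate on the array axis, 1-Lipschitz (`sqrt_lawOfCosines_le`, the triangle inequality).
Two centres are at most `(N / NT) * (NT - 1) * d` apart, so all delays `(νmax - ν l) / c` lie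
in `[0, tmax]`. Each summand of the objective is a unit phasor, so the triangle inequality
bounds `F` by `M * NT`; with the given delays the phase `(ν l - r) / c + t l = (νmax - r) / c`
does not depend on `l`, so the phasors are aligned and the bound is attained.
-/

/-- Triangle inequality for distances given by the law of cosines: moving the point on the axis
from `y` to `x` increases the distance to the point with polar coordinates `(r, θ)` by at most
`|x - y|`. -/
lemma sqrt_lawOfCosines_le (r θ x y : ℝ) :
    Real.sqrt (r ^ 2 + x ^ 2 - 2 * r * x * Real.cos θ) ≤
      Real.sqrt (r ^ 2 + y ^ 2 - 2 * r * y * Real.cos θ) + |x - y| := by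
  have hsc := Real.sin_sq_add_cos_sq θ
  have hb : r ^ 2 + y ^ 2 - 2 * r * y * Real.cos θ
      = (y - r * Real.cos θ) ^ 2 + (r * Real.sin θ) ^ 2 := by
    linear_combination -(r ^ 2) * hsc
  have hb0 : 0 ≤ r ^ 2 + y ^ 2 - 2 * r * y * Real.cos θ := by rw [hb]; positivity
  have hproj : |y - r * Real.cos θ| ≤ Real.sqrt (r ^ 2 + y ^ 2 - 2 * r * y * Real.cos θ) := by
    apply Real.abs_le_sqrt
    rw [hb]
    nlinarith [sq_nonneg (r * Real.sin θ)]
  have hcross : (x - y) * (y - r * Real.cos θ)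
      ≤ |x - y| * Real.sqrt (r ^ 2 + y ^ 2 - 2 * r * y * Real.cos θ) := by
    calc (x - y) * (y - r * Real.cos θ) ≤ |(x - y) * (y - r * Real.cos θ)| := le_abs_self _
      _ = |x - y| * |y - r * Real.cos θ| := abs_mul _ _
      _ ≤ _ := by gcongr
  apply Real.sqrt_le_iff.mpr
  refine ⟨by positivity, ?_⟩
  have h1 := Real.sq_sqrt hb0
  have h2 := sq_abs (x - y)
  nlinarith

lemma norm_exp_neg_I_mul (x : ℝ) : ‖Complex.exp (-(Complex.I) * (x : ℂ))‖ = 1 := by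
  simp [Complex.norm_exp]

/-- Proposition 2: if `t_max ≥ N(N_T-1)d/(N_T c)`, then the delays `t*ₗ = (ν_max - νₗ)/c`
are feasible and maximize `F(t) = ∑ₘ |∑ₗ e^{-j2πf_m((νₗ-r)/c + tₗ)}|`, attaining the
upper bound `M N_T`. Here `l : Fin NT` is 0-based, i.e. `(l : ℝ)` corresponds to `l - 1`
for `l = 1, …, N_T`. -/
theorem optimal_ttd_delays (M N NT : ℕ) (hM : 0 < M) (hN : 0 < N) (hNT : 0 < NT)
    (hdvd : NT ∣ N) (d c : ℝ) (hd : 0 < d) (hc : 0 < c)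
    (r : ℝ) (hr : 0 ≤ r) (θ : ℝ) (f : Fin M → ℝ)
    (ξ : Fin NT → ℝ)
    (hξ : ∀ l, ξ l = ((l : ℝ) - ((NT : ℝ) - 1) / 2) * ((N : ℝ) / (NT : ℝ)))
    (ν : Fin NT → ℝ)
    (hν : ∀ l, ν l = Real.sqrt (r ^ 2 + ξ l ^ 2 * d ^ 2 - 2 * r * ξ l * d * Real.cos θ))
    (νmax : ℝ) (hνmax : IsGreatest (Set.range ν) νmax)
    (F : (Fin NT → ℝ) → ℝ)
    (hF : ∀ t : Fin NT → ℝ, F t = ∑ m, ‖∑ l, Complex.exp (-(Complex.I) *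
      ((2 * Real.pi * f m * ((ν l - r) / c + t l) : ℝ) : ℂ))‖)
    (tmax : ℝ) (htmax : (N : ℝ) * ((NT : ℝ) - 1) * d / ((NT : ℝ) * c) ≤ tmax) :
    (∀ l, (νmax - ν l) / c ∈ Set.Icc (0 : ℝ) tmax) ∧
    (∀ t : Fin NT → ℝ, F t ≤ (M : ℝ) * (NT : ℝ)) ∧
    F (fun l => (νmax - ν l) / c) = (M : ℝ) * (NT : ℝ) := by
  have hNTpos : (0 : ℝ) < NT := by exact_mod_cast hNT
  have hNpos : (0 : ℝ) < N := by exact_mod_cast hN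
  refine ⟨fun l => ⟨?_, ?_⟩, fun t => ?_, ?_⟩
  · exact div_nonneg (sub_nonneg.mpr (hνmax.2 ⟨l, rfl⟩)) hc.le
  · refine le_trans ?_ htmax
    obtain ⟨k, hk⟩ := hνmax.1
    have key := sqrt_lawOfCosines_le r θ (ξ k * d) (ξ l * d)
    have hform : ∀ i, ν i = Real.sqrt (r ^ 2 + (ξ i * d) ^ 2
        - 2 * r * (ξ i * d) * Real.cos θ) := by
      intro i
      rw [hν i]
      ring_nf
    rw [← hform k, ← hform l, hk] at key
    have hidx : |((k : ℕ) : ℝ) - ((l : ℕ) : ℝ)| ≤ (NT : ℝ) - 1 := by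
      have hk1 : ((k : ℕ) : ℝ) + 1 ≤ NT := by exact_mod_cast k.isLt
      have hl1 : ((l : ℕ) : ℝ) + 1 ≤ NT := by exact_mod_cast l.isLt
      have hk0 : (0 : ℝ) ≤ ((k : ℕ) : ℝ) := Nat.cast_nonneg _
      have hl0 : (0 : ℝ) ≤ ((l : ℕ) : ℝ) := Nat.cast_nonneg _
      rw [abs_le]
      constructor <;> linarith
    have hdist : |ξ k * d - ξ l * d| ≤ ((NT : ℝ) - 1) * ((N : ℝ) / NT * d) := by
      have hdiff : ξ k * d - ξ l * d
          = (((k : ℕ) : ℝ) - ((l : ℕ) : ℝ)) * ((N : ℝ) / NT * d) := by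
        rw [hξ k, hξ l]
        ring
      have hpos : 0 < (N : ℝ) / NT * d := by positivity
      rw [hdiff, abs_mul, abs_of_pos hpos]
      gcongr
    have hbound : (N : ℝ) * ((NT : ℝ) - 1) * d / ((NT : ℝ) * c)
        = ((NT : ℝ) - 1) * ((N : ℝ) / NT * d) / c := by
      field_simp
    rw [hbound]
    gcongr
    linarith
  · rw [hF]
    calc _ ≤ ∑ _m : Fin M, (NT : ℝ) := by
          refine Finset.sum_le_sum fun m _ => (norm_sum_le _ _).trans ?_
          simp only [norm_exp_neg_I_mul]
          simp
      _ = _ := by simp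
  · rw [hF]
    -- the common phase of all `NT` phasors
    have hphase : ∀ l, (ν l - r) / c + (νmax - ν l) / c = (νmax - r) / c := by
      intro l
      ring
    simp only [hphase, Finset.sum_const, nsmul_eq_mul, norm_mul, norm_exp_neg_I_mul]
    simp
end
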